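/- Let Γ ≤ Δ be countable discrete groups with [Δ : Γ] = ∞. Suppose there exist a transversal T = {t_i : i ∈ ℕ} for the left cosets Δ/Γ and an element γ₀ ∈ core_Δ(Γ) such that the decreasing chain of normal subgroups of Γ given by Γ̄_k = ⟨⟨ t_i⁻¹γ₀t_i : i ≥ k ⟩⟩_Γ (the normal closure in Γ of {t_i⁻¹γ₀t_i : i ≥ k}) is not constant in k. Then there exists a family (θ_i)_{i∈I} of invariant random subgroups of Γ, indexed by a set I of cardinality continuum, such that the co-induced invariant random subgroups CIND_Γ^Δ(θ_i) of Δ are all non-atomic, weakly mixing, and pairwise distinct. -/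

import Mathlib

open MeasureTheory

namespace IRSPaper


/-! ## Basic setup: the space of subgroups, invariant random subgroups -/

/-- The conjugation action of a group on its space of subgroups: `g • H = gHg⁻¹`. -/
def conjSub {G : Type*} [Group G] (g : G) (H : Subgroup G) : Subgroup G :=
  Subgroup.map ((MulAut.conj g).toMonoidHom) H

/-- The topology on the space of subgroups of `G`, induced from the product topology
on `G → Bool` (i.e. the topology of `2^G`). -/
noncomputable instance instTopSub (G : Type*) [Group G] : TopologicalSpace (Subgroup G) :=
  TopologicalSpace.induced
    (fun (H : Subgroup G) (g : G) => @decide (g ∈ H) (Classical.dec _)) inferInstance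

/-- The Borel σ-algebra on the space of subgroups. -/
noncomputable instance instMeasSub (G : Type*) [Group G] : MeasurableSpace (Subgroup G) :=
  borel _

instance instBorelSub (G : Type*) [Group G] : BorelSpace (Subgroup G) := ⟨rfl⟩

/-- An invariant random subgroup: a Borel probability measure on `Sub(G)` which is invariant
under the conjugation action of `G`. -/
def IsIRS {G : Type*} [Group G] (θ : Measure (Subgroup G)) : Prop :=
  IsProbabilityMeasure θ ∧ ∀ g : G, Measure.map (conjSub g) θ = θ

/-- The basic set `N_F = {H ∈ Sub(G) : F ⊆ H}`. -/
def NSet {G : Type*} [Group G] (F : Set G) : Set (Subgroup G) :=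
  {H : Subgroup G | F ⊆ (H : Set G)}

/-- For `Γ ≤ Δ` and `S ⊆ Δ`, the set of subgroups of `Γ` containing every element of `Γ`
whose image in `Δ` lies in `S`.  When `S = t⁻¹Ft ⊆ Γ`, this is exactly the basic set
`N_{t⁻¹Ft}^Γ ⊆ Sub(Γ)`. -/
def NpullSet {Δ : Type*} [Group Δ] (Γ : Subgroup Δ) (S : Set Δ) : Set (Subgroup ↥Γ) :=
  {Λ : Subgroup ↥Γ | ∀ x : ↥Γ, (x : Δ) ∈ S → x ∈ Λ}

/-- `T` is a transversal for the left cosets `Δ/Γ`: each left coset `dΓ` contains exactly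
one element of `T`. -/
def IsLeftTransversal {Δ : Type*} [Group Δ] (Γ : Subgroup Δ) (T : Set Δ) : Prop :=
  ∀ d : Δ, ∃! t : Δ, t ∈ T ∧ d⁻¹ * t ∈ Γ

/-- The defining property of the co-induced invariant random subgroup
`ν = CIND_Γ^Δ(θ)` (with respect to the transversal `T`):  for every finite `F ⊆ Δ`,
`ν(N_F) = 0` if `F ⊄ core_Δ(Γ)` and `ν(N_F) = ∏_{t ∈ T} θ(N_{t⁻¹Ft}^Γ)` if `F ⊆ core_Δ(Γ)`. -/
def CindSpec {Δ : Type*} [Group Δ] (Γ : Subgroup Δ) (T : Set Δ)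
    (θ : Measure (Subgroup ↥Γ)) (ν : Measure (Subgroup Δ)) : Prop :=
  ∀ F : Finset Δ,
    (¬ (F : Set Δ) ⊆ (Γ.normalCore : Set Δ) → ν (NSet (F : Set Δ)) = 0) ∧
    ((F : Set Δ) ⊆ (Γ.normalCore : Set Δ) →
      ν (NSet (F : Set Δ)) =
        ∏' t : T, θ (NpullSet Γ ((fun d => (t : Δ)⁻¹ * d * (t : Δ)) '' (F : Set Δ))))

/-- Ergodicity of a (not necessarily probability-) measure-preserving action given by
an explicit family of maps: every invariant measurable set is null or conull. -/
def ErgodicAct {G α : Type*} [MeasurableSpace α] (act : G → α → α) (μ : Measure α) : Prop :=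
  ∀ s : Set α, MeasurableSet s → (∀ g : G, act g ⁻¹' s = s) → μ s = 0 ∨ μ sᶜ = 0

/-- Weak mixing of an action: the diagonal action on the square is ergodic. -/
def WeaklyMixingAct {G α : Type*} [MeasurableSpace α] (act : G → α → α) (μ : Measure α) : Prop :=
  ErgodicAct (fun (g : G) (p : α × α) => (act g p.1, act g p.2)) (μ.prod μ)

/-- A measure is non-atomic (has no atoms) if every singleton is null. -/
def NonAtomicMeasure {α : Type*} [MeasurableSpace α] (μ : Measure α) : Prop :=
  ∀ x : α, μ {x} = 0

/-- The kernel of an IRS `θ` of `Γ`: the set of `γ ∈ Γ` with `θ(N_γ) = 1`.  (For a probability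
measure this set is a subgroup; taking `Subgroup.closure` makes it a `Subgroup` on the nose.) -/
def kerIRS {Δ : Type*} [Group Δ] (Γ : Subgroup Δ) (θ : Measure (Subgroup ↥Γ)) : Subgroup ↥Γ :=
  Subgroup.closure {x : ↥Γ | θ {Λ : Subgroup ↥Γ | x ∈ Λ} = 1}

/-- `core_Δ(ker(θ))`, viewed as a subgroup of `Δ`. -/
def coreKer {Δ : Type*} [Group Δ] (Γ : Subgroup Δ) (θ : Measure (Subgroup ↥Γ)) : Subgroup Δ :=
  ((kerIRS Γ θ).map Γ.subtype).normalCore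

/-!
For any invariant random subgroup `θ` of `Γ`, sample subgroups `Λ_q ≤ Γ` independently with law `θ`,
one for each coset `q ∈ Δ ⧸ Γ`, and intersect their conjugates `σ(q) Λ_q σ(q)⁻¹`, where `σ(q)` is
the chosen representative of `q`. The law of the intersection is `CIND(θ)`. Conjugation by `Δ`
lifts to a shift of the coordinates twisted by `θ`-preserving conjugations in `Γ`. If `[Δ : Γ] = ∞`
then, by B. H. Neumann's covering lemma, `Δ` moves every finite set of cosets off itself, so the
twisted shift and its square are ergodic; hence `CIND(θ)` is weakly mixing.

Since the chain is not constant, some `N = Γ̄_k` misses at least one conjugate `t⁻¹γ₀t`, `t ∈ T`,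
and it misses only finitely many, say `n ≥ 1`. For `θ_p = p δ_Γ + (1 - p) δ_N` the product formula
gives `CIND(θ_p)(N_{γ₀}) = pⁿ`. For `0 < p < 1` this lies strictly between `0` and `1` and
determines `p`. Finally, a weakly mixing measure with an atom is a point mass, which this value
rules out.
-/

open scoped Pointwise symmDiff

section Ergodicity

variable {G α β : Type*} [MeasurableSpace α] [MeasurableSpace β]
  {act : G → α → α} {act' : G → β → β} {μ : Measure α} {ν : Measure β} {π : α → β}

theorem ErgodicAct.of_measurePreserving (h : ErgodicAct act μ) (hπ : MeasurePreserving π μ ν)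
    (hequiv : ∀ g x, π (act g x) = act' g (π x)) : ErgodicAct act' ν := by
  intro s hs hinv
  have hinv_pre (g : G) : act g ⁻¹' (π ⁻¹' s) = π ⁻¹' s := by
    ext x
    rw [Set.mem_preimage, Set.mem_preimage, hequiv, ← Set.mem_preimage, hinv, Set.mem_preimage]
  rw [← hπ.measure_preimage hs.nullMeasurableSet, ← hπ.measure_preimage hs.compl.nullMeasurableSet]
  exact h _ (hπ.measurable hs) hinv_pre

theorem WeaklyMixingAct.of_measurePreserving [SFinite μ] [SFinite ν] (h : WeaklyMixingAct act μ)
    (hπ : MeasurePreserving π μ ν) (hequiv : ∀ g x, π (act g x) = act' g (π x)) :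
    WeaklyMixingAct act' ν :=
  ErgodicAct.of_measurePreserving h (hπ.prod hπ) fun g x =>
    Prod.ext (hequiv g x.1) (hequiv g x.2)

-- The diagonal is invariant: if null, there are no atoms; if conull, every set is null or conull.
theorem WeaklyMixingAct.nonAtomicMeasure [MeasurableEq α] [IsProbabilityMeasure μ]
    (h : WeaklyMixingAct act μ) (hinj : ∀ g, Function.Injective (act g)) {E : Set α}
    (hE : MeasurableSet E) (hE₀ : μ E ≠ 0) (hE₁ : μ E ≠ 1) : NonAtomicMeasure μ := by
  intro x
  have hdiag_inv (g : G) :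
      (fun p : α × α => (act g p.1, act g p.2)) ⁻¹' Set.diagonal α = Set.diagonal α := by
    ext p
    exact (hinj g).eq_iff
  rcases h _ measurableSet_diagonal hdiag_inv with hnull | hconull
  · have hsquare : μ.prod μ ({x} ×ˢ {x}) = 0 :=
      measure_mono_null (fun p hp => hp.1.trans hp.2.symm) hnull
    simpa only [Measure.prod_prod, mul_self_eq_zero] using hsquare
  · have hrect : μ.prod μ (E ×ˢ Eᶜ) = 0 :=
      measure_mono_null (fun p hp (heq : p.1 = p.2) => hp.2 (heq ▸ hp.1)) hconull
    rw [Measure.prod_prod, mul_eq_zero, prob_compl_eq_zero_iff hE] at hrect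
    exact (hrect.elim hE₀ hE₁).elim

variable [IsProbabilityMeasure μ]

theorem abs_sq_measureReal_sub_self_le {T : α → α} (hT : MeasurePreserving T μ μ) {s u : Set α}
    (hs : MeasurableSet s) (hu : MeasurableSet u) (hinv : T ⁻¹' s = s)
    (hindep : μ (u ∩ T ⁻¹' u) = μ u * μ (T ⁻¹' u)) :
    |μ.real s ^ 2 - μ.real s| ≤ 4 * μ.real (u ∆ s) := by
  have hpre : μ.real ((T ⁻¹' u) ∆ s) = μ.real (u ∆ s) := by
    conv_lhs => rw [← hinv, ← Set.preimage_symmDiff]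
    exact congrArg ENNReal.toReal (hT.measure_preimage (hu.symmDiff hs).nullMeasurableSet)
  have hinter : μ.real (u ∩ T ⁻¹' u) = μ.real u ^ 2 := by
    rw [Measure.real, hindep, hT.measure_preimage hu.nullMeasurableSet, ENNReal.toReal_mul, sq,
      Measure.real]
  have hinter_sub : |μ.real (u ∩ T ⁻¹' u) - μ.real s| ≤ 2 * μ.real (u ∆ s) :=
    calc |μ.real (u ∩ T ⁻¹' u) - μ.real s|
        ≤ μ.real ((u ∩ T ⁻¹' u) ∆ s) :=
          abs_measureReal_sub_le_measureReal_symmDiff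
            (hu.inter (hT.measurable hu)).nullMeasurableSet hs.nullMeasurableSet
      _ ≤ μ.real (u ∆ s ∪ (T ⁻¹' u) ∆ s) := measureReal_mono fun x => by
          simp only [Set.mem_symmDiff, Set.mem_inter_iff, Set.mem_union]
          tauto
      _ ≤ μ.real (u ∆ s) + μ.real ((T ⁻¹' u) ∆ s) := measureReal_union_le _ _
      _ = 2 * μ.real (u ∆ s) := by rw [hpre, two_mul]
  have hsub : |μ.real u - μ.real s| ≤ μ.real (u ∆ s) :=
    abs_measureReal_sub_le_measureReal_symmDiff hu.nullMeasurableSet hs.nullMeasurableSet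
  have hsq_sub : |μ.real s ^ 2 - μ.real u ^ 2| ≤ 2 * μ.real (u ∆ s) :=
    calc |μ.real s ^ 2 - μ.real u ^ 2|
        = |μ.real s + μ.real u| * |μ.real u - μ.real s| := by
          rw [sq_sub_sq, abs_mul, abs_sub_comm (μ.real s)]
      _ ≤ 2 * μ.real (u ∆ s) := by
          gcongr
          rw [abs_of_nonneg (by positivity)]
          linarith [measureReal_le_one (μ := μ) (s := s), measureReal_le_one (μ := μ) (s := u)]
  calc |μ.real s ^ 2 - μ.real s|
      ≤ |μ.real s ^ 2 - μ.real u ^ 2| + |μ.real u ^ 2 - μ.real s| := abs_sub_le _ _ _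
    _ ≤ 4 * μ.real (u ∆ s) := by rw [← hinter]; rw [← hinter] at hsq_sub; linarith

theorem ergodicAct_of_isSetAlgebra {C : Set (Set α)} (hC : IsSetAlgebra C)
    (hgen : ‹MeasurableSpace α› = MeasurableSpace.generateFrom C)
    (hact : ∀ g, MeasurePreserving (act g) μ μ)
    (hindep : ∀ u ∈ C, ∃ g, μ (u ∩ act g ⁻¹' u) = μ u * μ (act g ⁻¹' u)) :
    ErgodicAct act μ := by
  intro s hs hinv
  have hsq : μ.real s ^ 2 - μ.real s = 0 := by
    refine abs_nonpos_iff.1 (le_of_forall_pos_le_add fun ε hε => ?_)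
    obtain ⟨u, huC, hus⟩ := exists_measure_symmDiff_lt_of_generateFrom_isSetRing hC.isSetRing
      ⟨{Set.univ}, Set.countable_singleton _, Set.singleton_subset_iff.2 hC.univ_mem, by simp⟩
      hgen hs (μ := μ) (ENNReal.ofReal_pos.2 (by positivity : 0 < ε / 4))
    obtain ⟨g, hg⟩ := hindep u huC
    have hu : MeasurableSet u := hgen ▸ MeasurableSpace.measurableSet_generateFrom huC
    have hle : μ.real (u ∆ s) ≤ ε / 4 := ENNReal.toReal_le_of_le_ofReal (by positivity) hus.le
    linarith [abs_sq_measureReal_sub_self_le (hact g) hs hu (hinv g) hg]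
  have hmul : μ.real s * (μ.real s - 1) = 0 := by linear_combination hsq
  rw [prob_compl_eq_zero_iff hs, ← measureReal_eq_zero_iff, ← ENNReal.toReal_eq_one_iff]
  exact (mul_eq_zero.1 hmul).imp_right sub_eq_zero.1

end Ergodicity

section InfiniteOrbits

variable {G J : Type*} [Group G] [MulAction G J]

theorem exists_finite_orbit_of_forall_smul_mem {F : Finset J}
    (hF : ∀ g : G, ∃ a ∈ F, g • a ∈ F) : ∃ a ∈ F, (MulAction.orbit G a).Finite := by
  classical
  -- The `g` with `g • a = b` form a coset of the stabilizer of `a`; finitely many such cosets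
  -- cover `G`, so some stabilizer has finite index.
  let pairs : Finset (J × J) := {p ∈ F ×ˢ F | ∃ g : G, g • p.1 = p.2}
  have hpairs : ∀ p : J × J, ∃ g : G, p ∈ pairs → g • p.1 = p.2 := fun p => by
    by_cases hp : p ∈ pairs
    · exact (Finset.mem_filter.1 hp).2.imp fun g hg _ => hg
    · exact ⟨1, fun h => absurd h hp⟩
  choose c hc using hpairs
  have hcover : ⋃ p ∈ pairs, c p • (MulAction.stabilizer G p.1 : Set G) = Set.univ := by
    refine Set.eq_univ_of_forall fun g => ?_
    obtain ⟨a, ha, hga⟩ := hF g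
    have hp : (a, g • a) ∈ pairs :=
      Finset.mem_filter.2 ⟨Finset.mem_product.2 ⟨ha, hga⟩, g, rfl⟩
    refine Set.mem_biUnion hp ?_
    rw [mem_leftCoset_iff, SetLike.mem_coe, MulAction.mem_stabilizer_iff, mul_smul,
      inv_smul_eq_iff, hc _ hp]
  obtain ⟨p, hp, hfin⟩ := Subgroup.exists_finiteIndex_of_leftCoset_cover hcover
  refine ⟨p.1, (Finset.mem_product.1 (Finset.mem_filter.1 hp).1).1, ?_⟩
  have : Finite (G ⧸ MulAction.stabilizer G p.1) := Subgroup.finite_quotient_of_finiteIndex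
  have : Finite (MulAction.orbit G p.1) :=
    .of_equiv _ (MulAction.orbitEquivQuotientStabilizer G p.1).symm
  exact Set.toFinite _

theorem exists_disjoint_image_smul [DecidableEq J] (hinf : ∀ j : J, (MulAction.orbit G j).Infinite)
    (F : Finset J) : ∃ g : G, Disjoint F (F.image (g • ·)) := by
  by_contra! hF
  obtain ⟨a, -, ha⟩ := exists_finite_orbit_of_forall_smul_mem (G := G) (F := F) fun g => by
    obtain ⟨_, hb, hbF⟩ := Finset.not_disjoint_iff.1 (hF g)
    obtain ⟨a, ha, rfl⟩ := Finset.mem_image.1 hbF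
    exact ⟨a, ha, hb⟩
  exact hinf a ha

theorem infinite_orbit_sum {K : Type*} [MulAction G K]
    (hJ : ∀ j : J, (MulAction.orbit G j).Infinite) (hK : ∀ k : K, (MulAction.orbit G k).Infinite)
    (a : J ⊕ K) : (MulAction.orbit G a).Infinite := by
  rcases a with j | k
  · refine ((hJ j).image Sum.inl_injective.injOn).mono ?_
    rintro _ ⟨_, ⟨g, rfl⟩, rfl⟩
    exact ⟨g, rfl⟩
  · refine ((hK k).image Sum.inr_injective.injOn).mono ?_
    rintro _ ⟨_, ⟨g, rfl⟩, rfl⟩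
    exact ⟨g, rfl⟩

end InfiniteOrbits

section TwistedShift

theorem measurePreserving_sumPiEquivProdPi_infinitePi {ι ι' : Type*} {X : ι ⊕ ι' → Type*}
    [∀ i, MeasurableSpace (X i)] (μ : ∀ i, Measure (X i)) [∀ i, IsProbabilityMeasure (μ i)] :
    MeasurePreserving (MeasurableEquiv.sumPiEquivProdPi X) (Measure.infinitePi μ)
      ((Measure.infinitePi fun i => μ (.inl i)).prod (Measure.infinitePi fun i => μ (.inr i))) := by
  refine MeasurePreserving.symm (MeasurableEquiv.sumPiEquivProdPi X).symm
    ⟨MeasurableEquiv.measurable _, Measure.eq_infinitePi _ fun s B hB => ?_⟩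
  have hbox : (MeasurableEquiv.sumPiEquivProdPi X).symm ⁻¹' (s : Set (ι ⊕ ι')).pi B =
      (s.toLeft : Set ι).pi (fun i => B (.inl i)) ×ˢ
        (s.toRight : Set ι').pi (fun i => B (.inr i)) := by
    ext x
    simp [Set.mem_pi, MeasurableEquiv.sumPiEquivProdPi, Equiv.sumPiEquivProdPi]
  rw [MeasurableEquiv.map_apply, hbox, Measure.prod_prod, Measure.infinitePi_pi _ fun i _ => hB _,
    Measure.infinitePi_pi _ fun i _ => hB _]
  conv_rhs => rw [← Finset.toLeft_disjSum_toRight (u := s), Finset.prod_disjSum]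

variable {G J Y : Type*}

/-- The coordinate shift of `J → Y` along `e : J → J`, followed by the map `φ j` in each
coordinate `j`. With `e = (g⁻¹ • ·)` and `φ` depending on `g` through a cocycle this is the
co-induced action, of which the generalized Bernoulli shift is the untwisted case. -/
def twistedShift (e : J → J) (φ : J → Y → Y) (x : J → Y) : J → Y :=
  fun j => φ j (x (e j))

variable [MeasurableSpace Y] {b : Measure Y} [IsProbabilityMeasure b]

theorem measurePreserving_twistedShift {e : J → J} (he : Function.Injective e) {φ : J → Y → Y}
    (hφ : ∀ j, MeasurePreserving (φ j) b b) :
    MeasurePreserving (twistedShift e φ) (Measure.infinitePi fun _ => b)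
      (Measure.infinitePi fun _ => b) := by
  have hshift : MeasurePreserving (fun (x : J → Y) j => x (e j)) (Measure.infinitePi fun _ => b)
      (Measure.infinitePi fun _ => b) :=
    ⟨by fun_prop, Measure.map_infinitePi_infinitePi_of_inj he⟩
  have hcoord : MeasurePreserving (fun (x : J → Y) j => φ j (x j)) (Measure.infinitePi fun _ => b)
      (Measure.infinitePi fun _ => b) := by
    refine ⟨measurable_pi_lambda _ fun j => (hφ j).measurable.comp (measurable_pi_apply j), ?_⟩
    simp_rw [Measure.infinitePi_map_pi _ fun j => (hφ j).measurable, (hφ _).map_eq]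
  exact hcoord.comp hshift

theorem measure_cylinder_inter_preimage_twistedShift [DecidableEq J] {e : J → J} {φ : J → Y → Y}
    (hφ : ∀ j, Measurable (φ j)) {F F' : Finset J} (hdisj : Disjoint F (F'.image e))
    {S : Set (F → Y)} {S' : Set (F' → Y)} (hS : MeasurableSet S) (hS' : MeasurableSet S') :
    Measure.infinitePi (fun _ => b) (cylinder F S ∩ twistedShift e φ ⁻¹' cylinder F' S') =
      Measure.infinitePi (fun _ => b) (cylinder F S) *
        Measure.infinitePi (fun _ => b) (twistedShift e φ ⁻¹' cylinder F' S') := by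
  have hindep : ProbabilityTheory.iIndepFun (fun (j : J) (x : J → Y) => x j)
      (Measure.infinitePi fun _ => b) :=
    ProbabilityTheory.iIndepFun_infinitePi (X := fun _ y => y) fun _ => measurable_id
  let twist : (F'.image e → Y) → F' → Y :=
    fun z j => φ j (z ⟨e j, Finset.mem_image_of_mem e j.2⟩)
  have htwist : Measurable twist :=
    measurable_pi_lambda _ fun j => (hφ j).comp (measurable_pi_apply _)
  exact (hindep.indepFun_finset F (F'.image e) hdisj fun _ =>
    measurable_pi_apply _).measure_inter_preimage_eq_mul S (twist ⁻¹' S') hS (htwist hS')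

variable [Group G] [MulAction G J] {φ : G → J → Y → Y}

theorem ergodicAct_twistedShift (hinf : ∀ j : J, (MulAction.orbit G j).Infinite)
    (hφ : ∀ g j, MeasurePreserving (φ g j) b b) :
    ErgodicAct (fun g => twistedShift (g⁻¹ • ·) (φ g)) (Measure.infinitePi fun _ : J => b) := by
  classical
  refine ergodicAct_of_isSetAlgebra isSetAlgebra_measurableCylinders
    generateFrom_measurableCylinders.symm
    (fun g => measurePreserving_twistedShift (MulAction.injective g⁻¹) (hφ g)) fun u hu => ?_
  obtain ⟨F, S, hS, rfl⟩ := (mem_measurableCylinders u).1 hu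
  obtain ⟨g, hg⟩ := exists_disjoint_image_smul hinf F
  exact ⟨g⁻¹, measure_cylinder_inter_preimage_twistedShift (fun j => (hφ _ j).measurable)
    (by simpa only [inv_inv] using hg) hS hS⟩

theorem weaklyMixingAct_twistedShift (hinf : ∀ j : J, (MulAction.orbit G j).Infinite)
    (hφ : ∀ g j, MeasurePreserving (φ g j) b b) :
    WeaklyMixingAct (fun g => twistedShift (g⁻¹ • ·) (φ g)) (Measure.infinitePi fun _ : J => b) :=
  -- The square of a twisted shift over `J` is a twisted shift over `J ⊕ J`.
  (ergodicAct_twistedShift (φ := fun g => Sum.elim (φ g) (φ g)) (infinite_orbit_sum hinf hinf)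
    fun g => Sum.rec (hφ g) (hφ g)).of_measurePreserving
      (measurePreserving_sumPiEquivProdPi_infinitePi fun _ : J ⊕ J => b) fun _ _ => rfl

end TwistedShift

section SubgroupSpace

variable {G : Type*} [Group G]

theorem mem_conjSub {g x : G} {H : Subgroup G} : x ∈ conjSub g H ↔ g⁻¹ * x * g ∈ H := by
  rw [conjSub, Subgroup.mem_map_equiv, MulAut.conj_symm_apply]

theorem conjSub_injective (g : G) : Function.Injective (conjSub g) :=
  Subgroup.map_injective (MulAut.conj g).injective

theorem conjSub_eq_self {H : Subgroup G} [H.Normal] (g : G) : conjSub g H = H :=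
  Subgroup.normal_iff_map_conj_eq.1 ‹_› g

open scoped Classical in
theorem isEmbedding_decide_mem :
    Topology.IsEmbedding fun (H : Subgroup G) (g : G) => decide (g ∈ H) where
  eq_induced := rfl
  injective H K hHK := SetLike.ext fun g => by simpa using congrFun hHK g

theorem measurableSet_setOf_mem (g : G) : MeasurableSet {H : Subgroup G | g ∈ H} := by
  classical
  have hmeas : Measurable fun H : Subgroup G => decide (g ∈ H) :=
    ((continuous_apply g).comp isEmbedding_decide_mem.continuous).measurable
  simpa only [Set.preimage, Set.mem_singleton_iff, decide_eq_true_eq] using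
    hmeas (measurableSet_singleton true)

variable [Countable G]

instance : MeasurableEq (Subgroup G) := by
  have := (isEmbedding_decide_mem (G := G)).t2Space
  have := (isEmbedding_decide_mem (G := G)).secondCountableTopology
  infer_instance

theorem measurableSet_NSet (F : Set G) : MeasurableSet (NSet F) := by
  have hNSet : NSet F = ⋂ g ∈ F, {H : Subgroup G | g ∈ H} := by
    ext H
    simp only [NSet, Set.subset_def, Set.mem_ofPred_eq, Set.mem_iInter, SetLike.mem_coe]
  exact hNSet ▸ .biInter F.to_countable fun g _ => measurableSet_setOf_mem g

theorem measurable_subgroup_iff {α : Type*} [MeasurableSpace α] {f : α → Subgroup G} :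
    Measurable f ↔ ∀ g : G, MeasurableSet {a | g ∈ f a} := by
  classical
  refine ⟨fun hf g => hf (measurableSet_setOf_mem g), fun hf => ?_⟩
  have hcomap : instMeasSub G =
      MeasurableSpace.comap (fun H g => decide (g ∈ H)) inferInstance := by
    rw [BorelSpace.measurable_eq (α := Subgroup G), isEmbedding_decide_mem.eq_induced, borel_comap,
      ← BorelSpace.measurable_eq]
  rw [hcomap, measurable_comap_iff, measurable_pi_iff]
  refine fun g => measurable_to_bool ?_
  simpa only [Set.preimage, Function.comp_apply, Set.mem_singleton_iff, decide_eq_true_eq]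
    using hf g

theorem measurable_subgroup_map {G' : Type*} [Group G'] [Countable G'] (f : G →* G') :
    Measurable (Subgroup.map f) :=
  measurable_subgroup_iff.2 fun y => by
    simp only [Subgroup.mem_map, Set.ofPred_exists, Set.ofPred_and]
    exact .iUnion fun x => (measurableSet_setOf_mem x).inter (.const _)

theorem measurable_iInf_subgroup {ι α : Type*} [Countable ι] [MeasurableSpace α]
    {f : ι → α → Subgroup G} (hf : ∀ i, Measurable (f i)) : Measurable fun a => ⨅ i, f i a :=
  measurable_subgroup_iff.2 fun g => by
    simp only [Subgroup.mem_iInf, Set.ofPred_forall]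
    exact .iInter fun i => hf i (measurableSet_setOf_mem g)

theorem measurable_conjSub (g : G) : Measurable (conjSub g) :=
  measurable_subgroup_map _

theorem IsIRS.measurePreserving_conjSub {θ : Measure (Subgroup G)} (hθ : IsIRS θ) (g : G) :
    MeasurePreserving (conjSub g) θ θ :=
  ⟨measurable_conjSub g, hθ.2 g⟩

end SubgroupSpace

section Coinduction

variable {Δ : Type*} [Group Δ] {Γ : Subgroup Δ}

theorem IsLeftTransversal.isComplement {T : Set Δ} (hT : IsLeftTransversal Γ T) :
    Subgroup.IsComplement T Γ := by
  refine Subgroup.isComplement_iff_existsUnique_inv_mul_mem.2 fun d => ?_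
  obtain ⟨t, ⟨htT, ht⟩, huniq⟩ := hT d
  have hinv (s : Δ) : s⁻¹ * d ∈ Γ ↔ d⁻¹ * s ∈ Γ := by
    rw [← inv_mem_iff, mul_inv_rev, inv_inv]
  exact ⟨⟨t, htT⟩, (hinv t).2 ht, fun s hs => Subtype.ext (huniq s ⟨s.2, (hinv s).1 hs⟩)⟩

variable {σ : Δ ⧸ Γ → Δ}

/-- The intersection of the conjugates `σ(q) Λ_q σ(q)⁻¹` over all cosets `q`, for a choice `σ` of
coset representatives. If the `Λ_q` are independent with law `θ`, its law is the co-induced IRS. -/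
def coindSubgroup (σ : Δ ⧸ Γ → Δ) (Λ : Δ ⧸ Γ → Subgroup Γ) : Subgroup Δ :=
  ⨅ q, conjSub (σ q) ((Λ q).map Γ.subtype)

theorem mem_coindSubgroup {Λ : Δ ⧸ Γ → Subgroup Γ} {g : Δ} :
    g ∈ coindSubgroup σ Λ ↔ ∀ q, (σ q)⁻¹ * g * σ q ∈ (Λ q).map Γ.subtype := by
  simp only [coindSubgroup, Subgroup.mem_iInf, mem_conjSub]

/-- The cocycle `Δ × Δ/Γ → Γ` of the section `σ`: it measures the failure of `σ` to be
`Δ`-equivariant. -/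
def sectionCocycle (hσ : ∀ q, (σ q : Δ ⧸ Γ) = q) (δ : Δ) (q : Δ ⧸ Γ) : Γ :=
  ⟨(σ q)⁻¹ * (δ * σ (δ⁻¹ • q)), QuotientGroup.eq.1 <| by
    rw [hσ, ← smul_eq_mul, ← MulAction.Quotient.smul_mk, hσ, smul_inv_smul]⟩

theorem map_subtype_conjSub (γ : Γ) (H : Subgroup Γ) :
    (conjSub γ H).map Γ.subtype = conjSub (γ : Δ) (H.map Γ.subtype) := by
  simp only [conjSub, Subgroup.map_map]
  rfl

theorem conjSub_coindSubgroup (hσ : ∀ q, (σ q : Δ ⧸ Γ) = q) (δ : Δ) (Λ : Δ ⧸ Γ → Subgroup Γ) :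
    conjSub δ (coindSubgroup σ Λ) = coindSubgroup σ
      (twistedShift (δ⁻¹ • ·) (fun q => conjSub (sectionCocycle hσ δ q)) Λ) := by
  ext x
  rw [mem_conjSub, mem_coindSubgroup, mem_coindSubgroup, (MulAction.surjective δ⁻¹).forall]
  refine forall_congr' fun q => ?_
  have hconj : (σ (δ⁻¹ • q))⁻¹ * (δ⁻¹ * x * δ) * σ (δ⁻¹ • q) =
      (sectionCocycle hσ δ q : Δ)⁻¹ * ((σ q)⁻¹ * x * σ q) * sectionCocycle hσ δ q := by
    rw [sectionCocycle]
    group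
  rw [twistedShift, map_subtype_conjSub, mem_conjSub, hconj]

theorem conj_mem_of_mem_normalCore {g : Δ} (hg : g ∈ Γ.normalCore) (d : Δ) : d⁻¹ * g * d ∈ Γ :=
  Γ.normalCore_le (Γ.normalCore_normal.conj_mem' g hg d)

theorem coindSubgroup_le_normalCore (hσ : ∀ q, (σ q : Δ ⧸ Γ) = q) (Λ : Δ ⧸ Γ → Subgroup Γ) :
    coindSubgroup σ Λ ≤ Γ.normalCore := by
  intro g hg d
  let q : Δ ⧸ Γ := (d⁻¹ : Δ)
  have hrep : d * σ q ∈ Γ := by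
    simpa only [inv_inv] using QuotientGroup.eq.1 (hσ q).symm
  have hgq : (σ q)⁻¹ * g * σ q ∈ Γ := Subgroup.map_subtype_le _ (mem_coindSubgroup.1 hg q)
  have hconj : d * g * d⁻¹ = d * σ q * ((σ q)⁻¹ * g * σ q) * (d * σ q)⁻¹ := by group
  exact hconj ▸ mul_mem (mul_mem hrep hgq) (inv_mem hrep)

theorem mem_NpullSet_iff {S : Set Δ} (hS : S ⊆ Γ) {Λ : Subgroup Γ} :
    Λ ∈ NpullSet Γ S ↔ S ⊆ Λ.map Γ.subtype := by
  refine ⟨fun hΛ s hs => ⟨⟨s, hS hs⟩, hΛ ⟨s, hS hs⟩ hs, rfl⟩, fun hΛ x hx => ?_⟩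
  exact (Subgroup.mem_map_iff_mem Γ.subtype_injective).1 (hΛ hx)

theorem preimage_coindSubgroup_NSet {F : Set Δ} (hF : F ⊆ Γ.normalCore) :
    coindSubgroup σ ⁻¹' NSet F =
      Set.univ.pi fun q => NpullSet Γ ((fun d => (σ q)⁻¹ * d * σ q) '' F) := by
  ext Λ
  have hconj (q : Δ ⧸ Γ) : (fun d => (σ q)⁻¹ * d * σ q) '' F ⊆ Γ :=
    Set.image_subset_iff.2 fun d hd => conj_mem_of_mem_normalCore (hF hd) _
  simp only [Set.mem_univ_pi, mem_NpullSet_iff (hconj _), Set.image_subset_iff]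
  exact ⟨fun h q d hd => mem_coindSubgroup.1 (h hd) q,
    fun h d hd => mem_coindSubgroup.2 fun q => h q hd⟩

/-- The co-induced IRS `CIND(θ)`, built as the law of `coindSubgroup σ` for independent subgroups
with law `θ`. -/
noncomputable def coindMeasure (σ : Δ ⧸ Γ → Δ) (θ : Measure (Subgroup Γ)) [IsProbabilityMeasure θ] :
    Measure (Subgroup Δ) :=
  (Measure.infinitePi fun _ => θ).map (coindSubgroup σ)

variable [Countable Δ]

theorem measurableSet_NpullSet (S : Set Δ) : MeasurableSet (NpullSet Γ S) :=
  measurableSet_NSet (((↑) : Γ → Δ) ⁻¹' S)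

theorem measurable_coindSubgroup (σ : Δ ⧸ Γ → Δ) : Measurable (coindSubgroup σ) := by
  have : Countable (Δ ⧸ Γ) := QuotientGroup.mk_surjective.countable
  exact measurable_iInf_subgroup fun q => (measurable_conjSub _).comp <|
    (measurable_subgroup_map _).comp (measurable_pi_apply q)

variable {θ : Measure (Subgroup Γ)}

theorem measurePreserving_coindSubgroup (σ : Δ ⧸ Γ → Δ) [IsProbabilityMeasure θ] :
    MeasurePreserving (coindSubgroup σ) (Measure.infinitePi fun _ => θ) (coindMeasure σ θ) :=
  ⟨measurable_coindSubgroup σ, rfl⟩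

instance [IsProbabilityMeasure θ] : IsProbabilityMeasure (coindMeasure σ θ) :=
  Measure.isProbabilityMeasure_map (measurable_coindSubgroup σ).aemeasurable

theorem coindMeasure_NSet_of_subset [IsProbabilityMeasure θ] {F : Set Δ}
    (hF : F ⊆ Γ.normalCore) :
    coindMeasure σ θ (NSet F) = ∏' q, θ (NpullSet Γ ((fun d => (σ q)⁻¹ * d * σ q) '' F)) := by
  have : Countable (Δ ⧸ Γ) := QuotientGroup.mk_surjective.countable
  rw [coindMeasure, Measure.map_apply (measurable_coindSubgroup σ) (measurableSet_NSet F),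
    preimage_coindSubgroup_NSet hF,
    Measure.infinitePi_pi_univ _ fun q => measurableSet_NpullSet _]

theorem coindMeasure_NSet_of_not_subset [IsProbabilityMeasure θ]
    (hσ : ∀ q, (σ q : Δ ⧸ Γ) = q) {F : Set Δ} (hF : ¬ F ⊆ Γ.normalCore) :
    coindMeasure σ θ (NSet F) = 0 := by
  have hempty : coindSubgroup σ ⁻¹' NSet F = ∅ :=
    Set.eq_empty_of_forall_notMem fun Λ hΛ =>
      hF (Set.Subset.trans hΛ (coindSubgroup_le_normalCore hσ Λ))
  rw [coindMeasure, Measure.map_apply (measurable_coindSubgroup σ) (measurableSet_NSet F), hempty,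
    measure_empty]

theorem isIRS_coindMeasure [IsProbabilityMeasure θ] (hσ : ∀ q, (σ q : Δ ⧸ Γ) = q)
    (hθ : IsIRS θ) : IsIRS (coindMeasure σ θ) := by
  refine ⟨inferInstance, fun δ => ?_⟩
  have hshift := measurePreserving_twistedShift (MulAction.injective (β := Δ ⧸ Γ) δ⁻¹)
    fun q => hθ.measurePreserving_conjSub (sectionCocycle hσ δ q)
  have hcomp : conjSub δ ∘ coindSubgroup σ = coindSubgroup σ ∘
      twistedShift (δ⁻¹ • ·) fun q => conjSub (sectionCocycle hσ δ q) :=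
    funext (conjSub_coindSubgroup hσ δ)
  rw [coindMeasure, Measure.map_map (measurable_conjSub δ) (measurable_coindSubgroup σ), hcomp]
  exact ((measurePreserving_coindSubgroup σ).comp hshift).map_eq

theorem weaklyMixingAct_coindMeasure [Infinite (Δ ⧸ Γ)] [IsProbabilityMeasure θ]
    (hσ : ∀ q, (σ q : Δ ⧸ Γ) = q) (hθ : IsIRS θ) :
    WeaklyMixingAct (fun (δ : Δ) H => conjSub δ H) (coindMeasure σ θ) := by
  have hinf (q : Δ ⧸ Γ) : (MulAction.orbit Δ q).Infinite := by
    rw [MulAction.orbit_eq_univ]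
    exact Set.infinite_univ
  exact (weaklyMixingAct_twistedShift hinf fun δ q =>
    hθ.measurePreserving_conjSub (sectionCocycle hσ δ q)).of_measurePreserving
      (measurePreserving_coindSubgroup σ) fun δ Λ => (conjSub_coindSubgroup hσ δ Λ).symm

theorem IsIRS.exists_cindSpec_weaklyMixingAct [Infinite (Δ ⧸ Γ)] {T : Set Δ}
    (hT : IsLeftTransversal Γ T) (hθ : IsIRS θ) :
    ∃ ν, IsIRS ν ∧ CindSpec Γ T θ ν ∧ WeaklyMixingAct (fun (δ : Δ) H => conjSub δ H) ν := by
  have := hθ.1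
  let e : Δ ⧸ Γ ≃ T := hT.isComplement.leftQuotientEquiv
  have he (q : Δ ⧸ Γ) : (e q : Δ ⧸ Γ) = q := hT.isComplement.quotientGroupMk_leftQuotientEquiv q
  refine ⟨coindMeasure (fun q => e q) θ, isIRS_coindMeasure he hθ,
    fun F => ⟨coindMeasure_NSet_of_not_subset he, fun hF => ?_⟩, weaklyMixingAct_coindMeasure he hθ⟩
  rw [coindMeasure_NSet_of_subset hF]
  exact e.tprod_eq fun τ : T => θ (NpullSet Γ ((fun d => (τ : Δ)⁻¹ * d * τ) '' F))

end Coinduction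

section TopMixture

theorem strictMono_toNNReal : StrictMono unitInterval.toNNReal := fun _ _ hpq => hpq

variable {G : Type*} [Group G]

/-- The measure `p δ_G + (1 - p) δ_N`. For `N` normal it is an IRS of `G`; varying `p` gives the
continuum of IRSs that are co-induced. -/
noncomputable def mixTop (N : Subgroup G) (p : unitInterval) : Measure (Subgroup G) :=
  unitInterval.toNNReal p • Measure.dirac ⊤ +
    unitInterval.toNNReal (unitInterval.symm p) • Measure.dirac N

theorem isIRS_mixTop [Countable G] (N : Subgroup G) [N.Normal] (p : unitInterval) :
    IsIRS (mixTop N p) := by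
  refine ⟨by unfold mixTop; infer_instance, fun g => ?_⟩
  have hg := measurable_conjSub g
  rw [mixTop, Measure.map_add _ _ hg, Measure.map_smul, Measure.map_smul, Measure.map_dirac' hg,
    Measure.map_dirac' hg, conjSub_eq_self, conjSub_eq_self]

variable {N : Subgroup G} {p : unitInterval} {A : Set (Subgroup G)}

theorem mixTop_apply_of_mem (htop : ⊤ ∈ A) (hN : N ∈ A) : mixTop N p A = 1 := by
  rw [mixTop, Measure.add_apply, Measure.smul_apply, Measure.smul_apply,
    Measure.dirac_apply_of_mem htop, Measure.dirac_apply_of_mem hN, ← add_smul,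
    unitInterval.toNNReal_add_toNNReal_symm, one_smul]

theorem mixTop_apply_of_notMem (hA : MeasurableSet A) (htop : ⊤ ∈ A) (hN : N ∉ A) :
    mixTop N p A = unitInterval.toNNReal p := by
  rw [mixTop, Measure.add_apply, Measure.smul_apply, Measure.smul_apply,
    Measure.dirac_apply_of_mem htop, Measure.dirac_apply' N hA, Set.indicator_of_notMem hN,
    smul_zero, add_zero, ENNReal.smul_def, smul_eq_mul, mul_one]

end TopMixture

section ConjugateChain

variable {Δ : Type*} [Group Δ] {Γ : Subgroup Δ} {γ₀ : Δ}

theorem CindSpec.measure_NSet_singleton_of_mixTop [Countable Δ] {T : Set Δ} {N : Subgroup Γ}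
    {p : unitInterval} {ν : Measure (Subgroup Δ)} (hν : CindSpec Γ T (mixTop N p) ν)
    (hγ₀ : γ₀ ∈ Γ.normalCore)
    (hfin : {τ : T | (τ : Δ)⁻¹ * γ₀ * τ ∉ N.map Γ.subtype}.Finite) :
    ν (NSet {γ₀}) = (unitInterval.toNNReal p : ENNReal) ^
      {τ : T | (τ : Δ)⁻¹ * γ₀ * τ ∉ N.map Γ.subtype}.ncard := by
  have hmem (τ : T) (Λ : Subgroup Γ) : Λ ∈ NpullSet Γ {(τ : Δ)⁻¹ * γ₀ * τ} ↔
      (τ : Δ)⁻¹ * γ₀ * τ ∈ Λ.map Γ.subtype := by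
    rw [mem_NpullSet_iff (Set.singleton_subset_iff.2 (conj_mem_of_mem_normalCore hγ₀ _)),
      Set.singleton_subset_iff, SetLike.mem_coe]
  have htop (τ : T) : ⊤ ∈ NpullSet Γ {(τ : Δ)⁻¹ * γ₀ * τ} := fun _ _ => Subgroup.mem_top _
  have hprod : ν (NSet {γ₀}) = ∏' τ : T, mixTop N p (NpullSet Γ {(τ : Δ)⁻¹ * γ₀ * τ}) := by
    simpa only [Finset.coe_singleton, Set.image_singleton] using
      (hν {γ₀}).2 (Finset.coe_singleton γ₀ ▸ Set.singleton_subset_iff.2 hγ₀)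
  rw [hprod, tprod_eq_prod (s := hfin.toFinset) fun τ hτ => mixTop_apply_of_mem (htop τ) <|
      (hmem τ N).2 (by simpa using hτ),
    Finset.prod_congr rfl fun τ hτ => mixTop_apply_of_notMem (measurableSet_NpullSet _) (htop τ) <|
      (hmem τ N).not.2 (hfin.mem_toFinset.1 hτ),
    Finset.prod_const, Set.ncard_eq_toFinset_card _ hfin]

/-- The set `{t_i⁻¹ γ₀ t_i : i ≥ k}`, as a subset of `Γ`; its normal closure is the paper's `Γ̄_k`.
Conjugates lying outside `Γ` are discarded, of which there are none if `γ₀ ∈ core_Δ(Γ)`. -/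
def conjTail (Γ : Subgroup Δ) (t : ℕ → Δ) (γ₀ : Δ) (k : ℕ) : Set Γ :=
  {x | ∃ i, k ≤ i ∧ (x : Δ) = (t i)⁻¹ * γ₀ * t i}

variable {t : ℕ → Δ}

theorem exists_conj_notMem_normalClosure_conjTail {k l : ℕ}
    (hne : Subgroup.normalClosure (conjTail Γ t γ₀ k) ≠
      Subgroup.normalClosure (conjTail Γ t γ₀ l)) :
    ∃ m i, (t i)⁻¹ * γ₀ * t i ∉ (Subgroup.normalClosure (conjTail Γ t γ₀ m)).map Γ.subtype := by
  by_contra! hall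
  have hle (m n : ℕ) : Subgroup.normalClosure (conjTail Γ t γ₀ m) ≤
      Subgroup.normalClosure (conjTail Γ t γ₀ n) := by
    refine Subgroup.normalClosure_le_normal ?_
    rintro x ⟨i, -, hx⟩
    rw [SetLike.mem_coe, ← Subgroup.mem_map_iff_mem Γ.subtype_injective, Subgroup.subtype_apply, hx]
    exact hall n i
  exact hne ((hle k l).antisymm (hle l k))

theorem finite_setOf_conj_notMem_normalClosure_conjTail (hγ₀ : γ₀ ∈ Γ.normalCore) (k : ℕ) :
    {τ : Set.range t | (τ : Δ)⁻¹ * γ₀ * τ ∉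
      (Subgroup.normalClosure (conjTail Γ t γ₀ k)).map Γ.subtype}.Finite := by
  refine ((Set.finite_Iio k).image (Set.rangeFactorization t)).subset ?_
  rintro ⟨_, i, rfl⟩ hi
  refine ⟨i, Set.mem_Iio.2 <| not_le.1 fun hki => hi ?_, rfl⟩
  exact ⟨⟨_, conj_mem_of_mem_normalCore hγ₀ (t i)⟩,
    Subgroup.subset_normalClosure ⟨i, hki, rfl⟩, rfl⟩

end ConjugateChain

/-- The sufficient criterion (Proposition 1.5 / 8.1, (1) ⟹ (2)): if `[Δ : Γ] = ∞` and there
are a transversal `{t_i : i ∈ ℕ}` for `Δ/Γ` and `γ₀ ∈ core_Δ(Γ)` such that the chain of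
normal subgroups `Γ̄_k = ⟨⟨t_i⁻¹γ₀t_i : i ≥ k⟩⟩_Γ` is not constant, then there is a
continuum-size family `(θ_r)_{r∈ℝ}` of IRSs of `Γ` whose co-inductions to `Δ` are pairwise
distinct, non-atomic and weakly mixing. -/
theorem criterion_continuum_many_IRS {Δ : Type*} [Group Δ] [Countable Δ] (Γ : Subgroup Δ)
    (hinf : Infinite (Δ ⧸ Γ))
    (t : ℕ → Δ) (hT : IsLeftTransversal Γ (Set.range t))
    (γ₀ : Δ) (hγ₀ : γ₀ ∈ Γ.normalCore)
    (hne : ∃ k l : ℕ,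
      Subgroup.normalClosure {x : ↥Γ | ∃ i : ℕ, k ≤ i ∧ (x : Δ) = (t i)⁻¹ * γ₀ * t i} ≠
      Subgroup.normalClosure {x : ↥Γ | ∃ i : ℕ, l ≤ i ∧ (x : Δ) = (t i)⁻¹ * γ₀ * t i}) :
    ∃ (θ : ℝ → Measure (Subgroup ↥Γ)) (ν : ℝ → Measure (Subgroup Δ)),
      (∀ r : ℝ, IsIRS (θ r)) ∧
      (∀ r : ℝ, IsIRS (ν r) ∧ CindSpec Γ (Set.range t) (θ r) (ν r)) ∧
      (∀ r : ℝ, NonAtomicMeasure (ν r)) ∧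
      (∀ r : ℝ, WeaklyMixingAct (fun (δ : Δ) (H : Subgroup Δ) => conjSub δ H) (ν r)) ∧
      Function.Injective ν := by
  obtain ⟨k, l, hkl⟩ := hne
  obtain ⟨m, i, hi⟩ := exists_conj_notMem_normalClosure_conjTail hkl
  let N := Subgroup.normalClosure (conjTail Γ t γ₀ m)
  let missed := {τ : Set.range t | (τ : Δ)⁻¹ * γ₀ * τ ∉ N.map Γ.subtype}
  have hfin : missed.Finite := finite_setOf_conj_notMem_normalClosure_conjTail hγ₀ m
  have hn : missed.ncard ≠ 0 := Set.ncard_ne_zero_of_mem (a := ⟨t i, i, rfl⟩) hi hfin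
  have hθ (r : ℝ) : IsIRS (mixTop N (unitInterval.sigmoid r)) := isIRS_mixTop _ _
  choose ν hν hcind hmix using fun r => (hθ r).exists_cindSpec_weaklyMixingAct hT
  have hvalue (r : ℝ) : ν r (NSet {γ₀}) =
      (unitInterval.toNNReal (unitInterval.sigmoid r) : ENNReal) ^ missed.ncard :=
    (hcind r).measure_NSet_singleton_of_mixTop hγ₀ hfin
  refine ⟨_, ν, hθ, fun r => ⟨hν r, hcind r⟩, fun r => ?_, hmix, fun r s hrs => ?_⟩
  · have := (hν r).1
    have hpos := strictMono_toNNReal (unitInterval.sigmoid_pos r)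
    have hlt := ENNReal.coe_lt_one_iff.2 (strictMono_toNNReal (unitInterval.sigmoid_lt_one r))
    exact (hmix r).nonAtomicMeasure conjSub_injective (measurableSet_NSet {γ₀})
      (hvalue r ▸ pow_ne_zero _ (ENNReal.coe_ne_zero.2 hpos.ne'))
      (hvalue r ▸ (pow_lt_one₀ zero_le hlt hn).ne)
  · have hpow := (ENNReal.pow_right_strictMono hn).injective (hvalue r ▸ hrs ▸ hvalue s)
    exact unitInterval.sigmoid_injective
      (strictMono_toNNReal.injective (ENNReal.coe_injective hpow))

end IRSPaper
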